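/- Let F : H → ℝ be a convex, coercive, differentiable function on a real Hilbert space H with nonempty set of minimizers X* which is second order regular, and minimum F*. Assume F satisfies the local Hölderian growth condition G^γ_loc for some γ > 2: there exist K > 0 and ε > 0 such that K·d(x,X*)^γ ≤ F(x) − F* whenever d(x,X*) ≤ ε. Let α > 9/2 + 6/(γ−2) and let x : [t₀, ∞) → H be a twice differentiable solution of ẍ(t) + (α/t)·ẋ(t) + ∇F(x(t)) = 0. Then F(x(t)) − F* = O(t^{−2γ/(γ−2)}) and ‖ẋ(t)‖ = O(t^{−γ/(γ−2)}) as t → ∞, and x(t) converges strongly to a minimizer of F. -/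

import Mathlib

open Filter Metric Topology Asymptotics

/-- The inner second order tangent set to `S` at `xb` in the direction `dir`:
`T²_S(x̄,h) = {w : d(x̄ + t h + ½ t² w, S) = o(t²) as t ↓ 0}`. -/
def innerSecondOrderTangentSet {H : Type*} [NormedAddCommGroup H] [InnerProductSpace ℝ H]
    (S : Set H) (xb dir : H) : Set H :=
  {w : H |
    (fun t : ℝ => Metric.infDist (xb + t • dir + (t ^ 2 / 2) • w) S)
      =o[nhdsWithin (0 : ℝ) (Set.Ioi 0)] fun t : ℝ => t ^ 2}

/-- `S` is second order regular at `x̄ ∈ S` if for every direction `h` and every sequence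
`xₙ = x̄ + tₙ h + ½ tₙ² rₙ` in `S` with `tₙ` monotonically non-increasing to `0` and
`tₙ rₙ → 0`, one has `d(rₙ, T²_S(x̄,h)) → 0`. -/
def SecondOrderRegularAt {H : Type*} [NormedAddCommGroup H] [InnerProductSpace ℝ H]
    (S : Set H) (xb : H) : Prop :=
  ∀ (dir : H) (t : ℕ → ℝ) (r : ℕ → H),
    (∀ n : ℕ, xb + t n • dir + ((t n) ^ 2 / 2) • r n ∈ S) →
    Antitone t → (∀ n : ℕ, 0 < t n) → Tendsto t atTop (𝓝 (0 : ℝ)) →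
    Tendsto (fun n : ℕ => t n • r n) atTop (𝓝 (0 : H)) →
    Tendsto (fun n : ℕ => Metric.infDist (r n) (innerSecondOrderTangentSet S xb dir))
      atTop (𝓝 (0 : ℝ))

/-- `S` is second order regular if it is second order regular at every point of `S`. -/
def SecondOrderRegular {H : Type*} [NormedAddCommGroup H] [InnerProductSpace ℝ H]
    (S : Set H) : Prop :=
  ∀ xb ∈ S, SecondOrderRegularAt S xb

/-!
Let `P` be the metric projection onto the set of minimizers and consider the weighted energy
`t ^ p * E(t)`, where
`E = t² (F(x) - F*) + c ‖x - P x‖² + λ t ⟪x - P x, ẋ⟫ + ½ t² ‖ẋ‖²`.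
The map `t ↦ P (x t)` need not be differentiable. However, freezing the anchor `P x` at its value
at time `t` overestimates the energy at later times up to `o(z - t)`: the term in `c` because `P`
is a nearest-point map, and the cross term because `P` is monotone and Lipschitz. The
(differentiable) energy with frozen anchor therefore controls the upper right derivative of `E`.

With `p = 0`, `λ = 2` the energy is nonincreasing, so `F(x(t)) - F* = O(t⁻²)` and the trajectory
enters the region where the growth condition holds. There Young's inequality absorbs the
wrong-signed term `p c ‖x - P x‖²` into `t² (F(x) - F*)` at the cost of `O(t ^ (-4 / (γ - 2)))`;
taking `p` slightly larger than `4 / (γ - 2)` gives `E(t) = O(t ^ (-4 / (γ - 2)))` and hence both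
rates. As `γ / (γ - 2) > 1`, the velocity is integrable and the trajectory has finite length.
-/

open Set
open scoped InnerProductSpace

section Analysis

lemma image_le_of_touching_above_deriv_le {f B B' : ℝ → ℝ} {a b : ℝ}
    (hf : ContinuousOn f (Icc a b)) (ha : f a ≤ B a) (hB : ContinuousOn B (Icc a b))
    (hB' : ∀ t ∈ Ico a b, HasDerivWithinAt B (B' t) (Ici t) t)
    (htouch : ∀ t ∈ Ico a b, ∃ (M : ℝ → ℝ) (m : ℝ), M t = f t ∧ (∀ᶠ z in 𝓝[>] t, f z ≤ M z) ∧
      HasDerivWithinAt M m (Ioi t) t ∧ m ≤ B' t) :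
    ∀ ⦃t⦄, t ∈ Icc a b → f t ≤ B t := by
  refine image_le_of_liminf_slope_right_le_deriv_boundary hf ha hB hB' fun t ht r hr => ?_
  obtain ⟨M, m, hMt, hfM, hM, hm⟩ := htouch t ht
  have hslope : ∀ᶠ z in 𝓝[>] t, slope M t z < r :=
    ((hasDerivWithinAt_iff_tendsto_slope' (by simp)).1 hM).eventually_lt_const (hm.trans_lt hr)
  refine Eventually.frequently ?_
  filter_upwards [hslope, hfM, self_mem_nhdsWithin] with z hz hfz htz
  refine lt_of_le_of_lt ?_ hz
  rw [slope_def_field, slope_def_field, hMt]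
  have : 0 < z - t := sub_pos.2 htz
  gcongr

lemma mul_rpow_le_mul_rpow_add {A m d r s : ℝ} (hA : 0 ≤ A) (hm : 0 < m) (hd : 0 ≤ d)
    (hr : 0 ≤ r) (hrs : r < s) :
    A * d ^ r ≤ m * d ^ s + A * (A / m) ^ (r / (s - r)) := by
  have hsr : 0 < s - r := sub_pos.2 hrs
  rcases le_total A (m * d ^ (s - r)) with hAd | hAd
  · calc A * d ^ r ≤ m * d ^ (s - r) * d ^ r := by gcongr
      _ = m * d ^ s := by
        rw [mul_assoc, ← Real.rpow_add_of_nonneg hd hsr.le hr, sub_add_cancel]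
      _ ≤ m * d ^ s + A * (A / m) ^ (r / (s - r)) := le_add_of_nonneg_right (by positivity)
  · have hd_rpow : d ^ (s - r) ≤ A / m := (le_div_iff₀' hm).2 hAd
    calc A * d ^ r = A * (d ^ (s - r)) ^ (r / (s - r)) := by
          rw [← Real.rpow_mul hd, mul_div_cancel₀ _ hsr.ne']
      _ ≤ A * (A / m) ^ (r / (s - r)) := by gcongr
      _ ≤ m * d ^ s + A * (A / m) ^ (r / (s - r)) := le_add_of_nonneg_left (by positivity)

lemma exists_mul_sq_le_of_mul_rpow_le {A κ K γ : ℝ} (hA : 0 ≤ A) (hκ : 0 < κ) (hK : 0 < K)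
    (hγ : 2 < γ) :
    ∃ C : ℝ, 0 ≤ C ∧ ∀ t d φ : ℝ, 0 < t → 0 ≤ d → K * d ^ γ ≤ φ →
      A * d ^ 2 ≤ κ * (t ^ 2 * φ) + C * t ^ (-(4 / (γ - 2))) := by
  have hγ' : 0 < γ - 2 := sub_pos.2 hγ
  refine ⟨A * (A / (κ * K)) ^ (2 / (γ - 2)), by positivity, fun t d φ ht hd hφ => ?_⟩
  have htwo : t ^ (-(4 / (γ - 2))) = ((t ^ 2)⁻¹) ^ (2 / (γ - 2)) := by
    rw [← Real.rpow_natCast, ← Real.rpow_neg ht.le, ← Real.rpow_mul ht.le]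
    congr 1
    push_cast
    ring
  have hyoung := mul_rpow_le_mul_rpow_add (m := κ * K * t ^ 2) hA (by positivity) hd
    zero_le_two hγ
  rw [div_mul_eq_div_mul_one_div, one_div, Real.mul_rpow (by positivity) (by positivity), ← htwo,
    Real.rpow_two, ← mul_assoc] at hyoung
  have hgrowth : κ * K * t ^ 2 * d ^ γ ≤ κ * (t ^ 2 * φ) :=
    calc κ * K * t ^ 2 * d ^ γ = κ * (t ^ 2 * (K * d ^ γ)) := by ring
      _ ≤ κ * (t ^ 2 * φ) := by gcongr
  exact hyoung.trans (add_le_add_left hgrowth _)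

lemma exists_tendsto_of_hasDerivAt_of_isBigO_rpow {E : Type*} [NormedAddCommGroup E]
    [NormedSpace ℝ E] [CompleteSpace E] {x v : ℝ → E} {T r : ℝ}
    (hx : ∀ t, T ≤ t → HasDerivAt x (v t) t) (hv : ContinuousOn v (Ici T)) (hr : r < -1)
    (hO : v =O[atTop] fun t : ℝ => t ^ r) : ∃ l, Tendsto x atTop (𝓝 l) := by
  have hint : MeasureTheory.IntegrableOn v (Ici T) :=
    (hv.locallyIntegrableOn measurableSet_Ici).integrableOn_of_isBigO_atTop hO
      ⟨Ioi 1, Ioi_mem_atTop 1, integrableOn_Ioi_rpow_of_lt hr one_pos⟩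
  exact ⟨_, MeasureTheory.tendsto_limUnder_of_hasDerivAt_of_integrableOn_Ioi
    (fun t ht => hx t (mem_Ioi.1 ht).le) (hint.mono_set Ioi_subset_Ici_self)⟩

lemma isBigO_rpow_of_isBigO_add_norm_sq_div_two {E : Type*} [SeminormedAddCommGroup E]
    {f : ℝ → ℝ} {v : ℝ → E} {r : ℝ} (hf : ∀ t, 0 ≤ f t)
    (h : (fun t => f t + ‖v t‖ ^ 2 / 2) =O[atTop] fun t : ℝ => t ^ (2 * r)) :
    v =O[atTop] fun t : ℝ => t ^ r := by
  have hle : (fun t => ‖v t‖ ^ 2) =O[atTop] fun t => 2 * (f t + ‖v t‖ ^ 2 / 2) :=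
    IsBigO.of_norm_le fun t => by
      rw [Real.norm_of_nonneg (sq_nonneg _)]
      linarith [hf t]
  have hsq : (fun t : ℝ => t ^ (2 * r)) =ᶠ[atTop] fun t => (t ^ r) ^ 2 := by
    filter_upwards [eventually_ge_atTop 0] with t ht
    rw [mul_comm, Real.rpow_mul ht, Real.rpow_two]
  exact ((hle.trans (h.const_mul_left 2)).trans_eventuallyEq hsq |>.of_pow two_ne_zero).of_norm_left

lemma hasDerivWithinAt_norm_sub_mul_norm_sub_slope {E : Type*} [NormedAddCommGroup E]
    [NormedSpace ℝ E] {x v : ℝ → E} {t : ℝ} (hx : HasDerivAt x (v t) t)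
    (hv : ContinuousAt v t) :
    HasDerivWithinAt (fun z => ‖x z - x t‖ * ‖v z - (z - t)⁻¹ • (x z - x t)‖) 0 (Ioi t) t := by
  have hdev : Tendsto (fun z => v z - (z - t)⁻¹ • (x z - x t)) (𝓝[>] t) (𝓝 0) := by
    have hslope := (hasDerivWithinAt_iff_tendsto_slope' (by simp)).1
      (hx.hasDerivWithinAt (s := Ioi t))
    simpa [slope_fun_def, Function.comp_def] using
      (hv.tendsto.mono_left nhdsWithin_le_nhds).sub hslope
  have hxO : (fun z => x z - x t) =O[𝓝[>] t] fun z => z - t :=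
    hx.differentiableAt.isBigO_sub.mono nhdsWithin_le_nhds
  rw [hasDerivWithinAt_iff_isLittleO]
  simpa using hxO.norm_left.mul_isLittleO ((isLittleO_one_iff ℝ).2 hdev).norm_left

lemma eq_of_tendsto_of_isBigO_rpow {X : Type*} [TopologicalSpace X] {F : X → ℝ} {x : ℝ → X} {l : X}
    {m r : ℝ} (hF : ContinuousAt F l) (hx : Tendsto x atTop (𝓝 l)) (hr : r < 0)
    (hO : (fun t => F (x t) - m) =O[atTop] fun t : ℝ => t ^ r) : F l = m := by
  have hdecay : Tendsto (fun t : ℝ => t ^ r) atTop (𝓝 0) := by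
    simpa using tendsto_rpow_neg_atTop (neg_pos.2 hr)
  exact sub_eq_zero.1 <| tendsto_nhds_unique ((hF.tendsto.comp hx).sub_const m)
    (hO.trans_tendsto hdecay)

end Analysis

section Convexity

lemma setOf_forall_le_eq_setOf_le {X β : Type*} [Preorder β] {F : X → β} {y : X}
    (hy : ∀ w, F y ≤ F w) : {z | ∀ w, F z ≤ F w} = {z | F z ≤ F y} :=
  ext fun _ => ⟨fun hz => hz y, fun hz w => hz.trans (hy w)⟩

lemma infDist_lt_of_isPreconnected {X : Type*} [PseudoMetricSpace X] {S U : Set X} {ε : ℝ}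
    (hU : IsPreconnected U) (hSU : (S ∩ U).Nonempty) (hε : 0 ≤ ε)
    (hsphere : ∀ u ∈ U, infDist u S ≠ ε) {z : X} (hz : z ∈ U) : infDist z S < ε := by
  by_contra! hle
  obtain ⟨y, hyS, hyU⟩ := hSU
  obtain ⟨u, hu, huε⟩ := hU.intermediate_value hyU hz (continuous_infDist_pt S).continuousOn
    ⟨(infDist_zero_of_mem hyS).trans_le hε, hle⟩
  exact hsphere u hu huε

lemma sub_le_inner_gradient_of_convexOn {H : Type*} [NormedAddCommGroup H] [InnerProductSpace ℝ H]
    [CompleteSpace H] {F : H → ℝ} (hF : ConvexOn ℝ univ F) {g z : H} (hg : HasGradientAt F g z)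
    (w : H) : F z - F w ≤ ⟪g, z - w⟫_ℝ := by
  have hline : ConvexOn ℝ univ (F ∘ AffineMap.lineMap (k := ℝ) z w) := by
    simpa using hF.comp_affineMap (AffineMap.lineMap (k := ℝ) z w)
  have hderiv : HasDerivAt (F ∘ AffineMap.lineMap (k := ℝ) z w) ⟪g, w - z⟫_ℝ 0 := by
    have hfderiv : HasFDerivAt F (InnerProductSpace.toDual ℝ H g)
        (AffineMap.lineMap (k := ℝ) z w 0) := by simpa using hg.hasFDerivAt
    simpa using hfderiv.comp_hasDerivAt (0 : ℝ) AffineMap.hasDerivAt_lineMap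
  have hslope := hline.le_slope_of_hasDerivAt (mem_univ 0) (mem_univ 1) one_pos hderiv
  simp only [slope_def_field, Function.comp_apply, AffineMap.lineMap_apply_one,
    AffineMap.lineMap_apply_zero, sub_zero, div_one] at hslope
  rw [← neg_sub w z, inner_neg_right]
  linarith

end Convexity

section HilbertSpace

variable {H : Type*} [NormedAddCommGroup H] [InnerProductSpace ℝ H]

/-- `P` is a metric projection onto `S`, characterised by the obtuse-angle condition: `P z ∈ S`
and `z - P z` makes an obtuse angle with every direction from `P z` into `S`. For convex `S` this
says that `P z` is the point of `S` nearest to `z`. -/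
structure IsMetricProjection (S : Set H) (P : H → H) : Prop where
  mem : ∀ z, P z ∈ S
  inner_nonpos : ∀ z, ∀ w ∈ S, ⟪z - P z, w - P z⟫_ℝ ≤ 0

namespace IsMetricProjection

variable {S : Set H} {P : H → H}

lemma exists_of_convex (hne : S.Nonempty) (hcomplete : IsComplete S) (hconv : Convex ℝ S) :
    ∃ P, IsMetricProjection S P := by
  choose P hmem hmin using exists_norm_eq_iInf_of_complete_convex hne hcomplete hconv
  exact ⟨P, hmem, fun z => (norm_eq_iInf_iff_real_inner_le_zero hconv (hmem z)).1 (hmin z)⟩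

lemma norm_sub_le (hP : IsMetricProjection S P) (z : H) {w : H} (hw : w ∈ S) :
    ‖z - P z‖ ≤ ‖z - w‖ := by
  have hsplit : ‖z - w‖ ^ 2 = ‖z - P z‖ ^ 2 - 2 * ⟪z - P z, w - P z⟫_ℝ + ‖w - P z‖ ^ 2 := by
    rw [← norm_sub_sq_real, sub_sub_sub_cancel_right]
  have hinner := hP.inner_nonpos z w hw
  refine le_of_sq_le_sq ?_ (norm_nonneg _)
  linarith [sq_nonneg ‖w - P z‖]

lemma norm_sub_eq_infDist (hP : IsMetricProjection S P) (z : H) : ‖z - P z‖ = infDist z S := by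
  refine le_antisymm ((le_infDist ⟨_, hP.mem z⟩).2 fun {w} hw => ?_) ?_
  · rw [dist_eq_norm]
    exact hP.norm_sub_le z hw
  · rw [← dist_eq_norm]
    exact infDist_le_dist_of_mem (hP.mem z)

lemma norm_sq_sub_le_inner (hP : IsMetricProjection S P) (z w : H) :
    ‖P z - P w‖ ^ 2 ≤ ⟪P z - P w, z - w⟫_ℝ := by
  have hz := hP.inner_nonpos z (P w) (hP.mem w)
  have hw := hP.inner_nonpos w (P z) (hP.mem z)
  have hsum : ⟪P z - P w, z - w⟫_ℝ =
      ‖P z - P w‖ ^ 2 - ⟪z - P z, P w - P z⟫_ℝ - ⟪w - P w, P z - P w⟫_ℝ := by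
    rw [← real_inner_self_eq_norm_sq, ← neg_sub (P z) (P w), inner_neg_right, sub_neg_eq_add,
      real_inner_comm _ (z - P z), real_inner_comm _ (w - P w), ← inner_add_right,
      ← inner_sub_right]
    congr 1
    abel
  linarith

lemma lipschitzWith_one (hP : IsMetricProjection S P) : LipschitzWith 1 P := by
  refine LipschitzWith.of_dist_le_mul fun z w => ?_
  rw [NNReal.coe_one, one_mul, dist_eq_norm, dist_eq_norm]
  by_contra! hlt
  have hfirm := (hP.norm_sq_sub_le_inner z w).trans (real_inner_le_norm _ _)
  nlinarith [norm_nonneg (z - w)]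

/-- The monotone part `⟪P q - P p, q - p⟫` of the displacement has the favourable sign, so moving
the anchor from `P p` to `P q` only costs the deviation of `v` from the difference quotient. -/
lemma inner_sub_le_inner_sub_add (hP : IsMetricProjection S P) (p q v : H) {h : ℝ} (hh : 0 ≤ h) :
    ⟪q - P q, v⟫_ℝ ≤ ⟪q - P p, v⟫_ℝ + ‖q - p‖ * ‖v - h⁻¹ • (q - p)‖ := by
  have hmono : 0 ≤ ⟪P q - P p, h⁻¹ • (q - p)⟫_ℝ := by
    rw [inner_smul_right]
    exact mul_nonneg (inv_nonneg.2 hh) ((sq_nonneg _).trans (hP.norm_sq_sub_le_inner q p))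
  have hdev : -⟪P q - P p, v - h⁻¹ • (q - p)⟫_ℝ ≤ ‖q - p‖ * ‖v - h⁻¹ • (q - p)‖ :=
    calc -⟪P q - P p, v - h⁻¹ • (q - p)⟫_ℝ
        ≤ ‖P q - P p‖ * ‖v - h⁻¹ • (q - p)‖ :=
          (neg_le_abs _).trans (abs_real_inner_le_norm _ _)
      _ ≤ ‖q - p‖ * ‖v - h⁻¹ • (q - p)‖ := by
          gcongr
          simpa [dist_eq_norm] using hP.lipschitzWith_one.dist_le_mul q p
  have hsplit : ⟪q - P q, v⟫_ℝ = ⟪q - P p, v⟫_ℝ - ⟪P q - P p, v - h⁻¹ • (q - p)⟫_ℝ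
      - ⟪P q - P p, h⁻¹ • (q - p)⟫_ℝ := by
    rw [sub_sub, ← inner_add_right, sub_add_cancel, ← inner_sub_left]
    congr 1
    abel
  linarith

end IsMetricProjection

section Energy

variable {F : H → ℝ} {Fs c lam α p : ℝ} {x v : ℝ → H}

/-- The Lyapunov energy of a trajectory `x` with velocity `v`, measured relative to the level `Fs`
and an anchor point `y`. The energy of the convergence proof takes `y = P (x t)`; the anchor is
kept as a separate argument so that it can be frozen. -/
noncomputable def avdEnergy (F : H → ℝ) (Fs c lam : ℝ) (x v : ℝ → H) (y : H) (t : ℝ) : ℝ :=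
  t ^ 2 * (F (x t) - Fs) + c * ‖x t - y‖ ^ 2 + lam * t * ⟪x t - y, v t⟫_ℝ + t ^ 2 / 2 * ‖v t‖ ^ 2

lemma sub_mul_norm_mul_norm_le_avdEnergy {t : ℝ} (hlam : 0 ≤ lam) (ht : 0 ≤ t) (y : H) :
    t ^ 2 * (F (x t) - Fs) + c * ‖x t - y‖ ^ 2 - lam * ‖x t - y‖ * (t * ‖v t‖)
      + (t * ‖v t‖) ^ 2 / 2 ≤ avdEnergy F Fs c lam x v y t := by
  have hinner : -(‖x t - y‖ * ‖v t‖) ≤ ⟪x t - y, v t⟫_ℝ :=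
    (abs_le.1 (abs_real_inner_le_norm _ _)).1
  have hcross := mul_le_mul_of_nonneg_left hinner (mul_nonneg hlam ht)
  unfold avdEnergy
  linarith

lemma avdEnergy_le_avdEnergy_add {S : Set H} {P : H → H} (hP : IsMetricProjection S P)
    (hc : 0 ≤ c) (hlam : 0 ≤ lam) {t z : ℝ} (hz : 0 ≤ z) (htz : t ≤ z) :
    avdEnergy F Fs c lam x v (P (x z)) z ≤ avdEnergy F Fs c lam x v (P (x t)) z +
      lam * z * (‖x z - x t‖ * ‖v z - (z - t)⁻¹ • (x z - x t)‖) := by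
  have hdist : c * ‖x z - P (x z)‖ ^ 2 ≤ c * ‖x z - P (x t)‖ ^ 2 := by
    gcongr
    exact hP.norm_sub_le _ (hP.mem _)
  have hcross := mul_le_mul_of_nonneg_left
    (hP.inner_sub_le_inner_sub_add (x t) (x z) (v z) (sub_nonneg.2 htz)) (mul_nonneg hlam hz)
  unfold avdEnergy
  linarith

variable [CompleteSpace H] {g : H} {t : ℝ}

lemma hasDerivAt_avdEnergy (ht : t ≠ 0) (hF : HasGradientAt F g (x t))
    (hx : HasDerivAt x (v t) t) (hv : HasDerivAt v (-((α / t) • v t) - g) t) (y : H) :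
    HasDerivAt (avdEnergy F Fs c lam x v y)
      (t * (2 * (F (x t) - Fs) - lam * ⟪g, x t - y⟫_ℝ - (α - 1 - lam) * ‖v t‖ ^ 2)
        + (2 * c - lam * (α - 1)) * ⟪x t - y, v t⟫_ℝ) t := by
  have hFx : HasDerivAt (fun z => F (x z) - Fs) ⟪g, v t⟫_ℝ t := by
    simpa [Function.comp_def] using (hF.hasFDerivAt.comp_hasDerivAt t hx).sub_const Fs
  have hxy : HasDerivAt (fun z => x z - y) (v t) t := hx.sub_const y
  have hsq : HasDerivAt (fun z : ℝ => z ^ 2) (2 * t) t := by simpa using hasDerivAt_pow 2 t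
  have hlin : HasDerivAt (fun z : ℝ => lam * z) lam t := by
    simpa using (hasDerivAt_id t).const_mul lam
  refine ((((hsq.mul hFx).add (hxy.norm_sq.const_mul c)).add
    (hlin.mul (hxy.inner ℝ hv))).add ((hsq.div_const 2).mul hv.norm_sq)).congr_deriv ?_
  simp only [inner_sub_right, inner_neg_right, inner_smul_right, real_inner_self_eq_norm_sq,
    real_inner_comm g]
  field_simp
  ring

/-- The value of `c` is the one that cancels the term in `⟪x t - y, v t⟫`. -/
lemma hasDerivAt_rpow_mul_avdEnergy (ht : 0 < t) (hc : c = lam * (α - 1 - p) / 2)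
    (hF : HasGradientAt F g (x t)) (hx : HasDerivAt x (v t) t)
    (hv : HasDerivAt v (-((α / t) • v t) - g) t) (y : H) :
    HasDerivAt (fun z => z ^ p * avdEnergy F Fs c lam x v y z)
      (t ^ (p - 1) * ((2 + p) * (t ^ 2 * (F (x t) - Fs)) - lam * (t ^ 2 * ⟪g, x t - y⟫_ℝ)
        - (α - lam - 1 - p / 2) * (t ^ 2 * ‖v t‖ ^ 2) + p * c * ‖x t - y‖ ^ 2)) t := by
  refine ((Real.hasDerivAt_rpow_const (Or.inl ht.ne')).mul
    (hasDerivAt_avdEnergy ht.ne' hF hx hv y)).congr_deriv ?_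
  have htp : t ^ p = t ^ (p - 1) * t := by rw [← Real.rpow_add_one ht.ne', sub_add_cancel]
  rw [htp, hc]
  unfold avdEnergy
  ring

end Energy

/-- `x` solves the system `ẍ + (α / t) ẋ + F' x = 0` with asymptotically vanishing damping on
`[T, ∞)`, with velocity `v`. -/
structure IsAVDSolution (F' : H → H) (α T : ℝ) (x v : ℝ → H) : Prop where
  hasDerivAt_position : ∀ t, T ≤ t → HasDerivAt x (v t) t
  hasDerivAt_velocity : ∀ t, T ≤ t → HasDerivAt v (-((α / t) • v t) - F' (x t)) t

namespace IsAVDSolution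

variable {F : H → ℝ} {F' P : H → H} {S : Set H} {Fs α T : ℝ} {x v : ℝ → H}

lemma mono (hsol : IsAVDSolution F' α T x v) {T' : ℝ} (hT : T ≤ T') :
    IsAVDSolution F' α T' x v :=
  ⟨fun t ht => hsol.1 t (hT.trans ht), fun t ht => hsol.2 t (hT.trans ht)⟩

lemma continuousOn_position (hsol : IsAVDSolution F' α T x v) : ContinuousOn x (Ici T) :=
  fun t ht => (hsol.1 t ht).continuousAt.continuousWithinAt

lemma continuousOn_velocity (hsol : IsAVDSolution F' α T x v) : ContinuousOn v (Ici T) :=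
  fun t ht => (hsol.2 t ht).continuousAt.continuousWithinAt

lemma continuousOn_rpow_mul_avdEnergy (hsol : IsAVDSolution F' α T x v) (hF : Continuous F)
    (hP : Continuous P) (hT : 0 < T) (c lam p : ℝ) :
    ContinuousOn (fun t => t ^ p * avdEnergy F Fs c lam x v (P (x t)) t) (Ici T) := by
  have hx := hsol.continuousOn_position
  have hv := hsol.continuousOn_velocity
  have hdiff : ContinuousOn (fun t => x t - P (x t)) (Ici T) := hx.sub (hP.comp_continuousOn hx)
  have hFx : ContinuousOn (fun t => F (x t)) (Ici T) := hF.comp_continuousOn hx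
  have hinner : ContinuousOn (fun t => ⟪x t - P (x t), v t⟫_ℝ) (Ici T) := hdiff.inner hv
  have hpow : ContinuousOn (fun t : ℝ => t ^ p) (Ici T) := fun t ht =>
    (Real.continuousAt_rpow_const _ _ (Or.inl (hT.trans_le ht).ne')).continuousWithinAt
  unfold avdEnergy
  fun_prop

variable [CompleteSpace H]

lemma rpow_mul_avdEnergy_le (hsol : IsAVDSolution F' α T x v) (hT : 0 < T)
    (hgrad : ∀ z, HasGradientAt F (F' z) z) (hP : IsMetricProjection S P)
    (hFP : ∀ z, F z - Fs ≤ ⟪F' z, z - P z⟫_ℝ) {p lam c : ℝ} (hlam : 0 ≤ lam)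
    (hc : c = lam * (α - 1 - p) / 2) (hc0 : 0 ≤ c) (hα : lam + 1 + p / 2 ≤ α) {B B' : ℝ → ℝ}
    (hB : ∀ t, T ≤ t → HasDerivAt B (B' t) t)
    (hBT : T ^ p * avdEnergy F Fs c lam x v (P (x T)) T ≤ B T)
    (hB' : ∀ t, T ≤ t → t ^ (p - 1) * ((2 + p - lam) * (t ^ 2 * (F (x t) - Fs))
      + p * c * ‖x t - P (x t)‖ ^ 2) ≤ B' t) {t : ℝ} (ht : T ≤ t) :
    t ^ p * avdEnergy F Fs c lam x v (P (x t)) t ≤ B t := by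
  have hF : Continuous F := continuous_iff_continuousAt.2 fun z => (hgrad z).continuousAt
  have hcont := hsol.continuousOn_rpow_mul_avdEnergy (Fs := Fs) hF hP.lipschitzWith_one.continuous
    hT c lam p
  refine image_le_of_touching_above_deriv_le (hcont.mono Icc_subset_Ici_self) hBT
    (fun s hs => (hB s hs.1).continuousAt.continuousWithinAt)
    (fun s hs => (hB s hs.1).hasDerivWithinAt) (fun s hs => ?_) ⟨ht, le_rfl⟩
  have hs0 : 0 < s := hT.trans_le hs.1
  have hx := hsol.hasDerivAt_position s hs.1
  have hv := hsol.hasDerivAt_velocity s hs.1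
  have hfrozen := (hasDerivAt_rpow_mul_avdEnergy (Fs := Fs) hs0 hc (hgrad (x s)) hx hv
    (P (x s))).hasDerivWithinAt (s := Ioi s)
  have hrem : HasDerivWithinAt (fun z => z ^ p *
      (lam * z * (‖x z - x s‖ * ‖v z - (z - s)⁻¹ • (x z - x s)‖))) 0 (Ioi s) s := by
    have hcoeff := ((Real.hasDerivAt_rpow_const (p := p) (Or.inl hs0.ne')).mul
      ((hasDerivAt_id s).const_mul lam)).hasDerivWithinAt (s := Ioi s)
    simpa [mul_assoc] using
      hcoeff.fun_mul (hasDerivWithinAt_norm_sub_mul_norm_sub_slope hx hv.continuousAt)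
  refine ⟨_, _, ?_, ?_, hfrozen.add hrem, ?_⟩
  · simp
  · filter_upwards [self_mem_nhdsWithin] with z hz
    have hz0 : 0 < z := hs0.trans hz
    have hle := mul_le_mul_of_nonneg_left
      (avdEnergy_le_avdEnergy_add (F := F) (Fs := Fs) (x := x) (v := v) hP hc0 hlam hz0.le
        (le_of_lt hz)) (Real.rpow_nonneg hz0.le p)
    simpa [mul_add] using hle
  · have hconv : lam * (s ^ 2 * (F (x s) - Fs)) ≤ lam * (s ^ 2 * ⟪F' (x s), x s - P (x s)⟫_ℝ) := by
      gcongr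
      exact hFP _
    have hfric : 0 ≤ (α - lam - 1 - p / 2) * (s ^ 2 * ‖v s‖ ^ 2) :=
      mul_nonneg (by linarith) (by positivity)
    refine le_trans ?_ (hB' s hs.1)
    rw [add_zero]
    gcongr
    linarith

lemma exists_sub_le_div_sq (hsol : IsAVDSolution F' α T x v) (hT : 0 < T)
    (hgrad : ∀ z, HasGradientAt F (F' z) z) (hP : IsMetricProjection S P)
    (hFP : ∀ z, F z - Fs ≤ ⟪F' z, z - P z⟫_ℝ) (hα : 3 ≤ α) :
    ∃ C, ∀ t, T ≤ t → F (x t) - Fs ≤ C / t ^ 2 := by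
  refine ⟨T ^ (0 : ℝ) * avdEnergy F Fs (α - 1) 2 x v (P (x T)) T, fun t ht => ?_⟩
  have ht0 : 0 < t := hT.trans_le ht
  have hdecay := hsol.rpow_mul_avdEnergy_le (p := 0) hT hgrad hP hFP zero_le_two
    (c := α - 1) (by ring) (by linarith) (by linarith) (fun s _ => hasDerivAt_const s _) le_rfl
    (by simp) ht
  have hlower := sub_mul_norm_mul_norm_le_avdEnergy (F := F) (Fs := Fs) (c := α - 1) (x := x)
    (v := v) zero_le_two ht0.le (P (x t))
  have hsquare : 0 ≤ (α - 3) * ‖x t - P (x t)‖ ^ 2 := mul_nonneg (by linarith) (sq_nonneg _)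
  rw [Real.rpow_zero, one_mul] at hdecay
  rw [le_div_iff₀' (by positivity)]
  linarith [sq_nonneg (2 * ‖x t - P (x t)‖ - t * ‖v t‖)]

lemma exists_avdEnergy_le_mul_rpow_sub (hsol : IsAVDSolution F' α T x v) (hT : 0 < T)
    (hgrad : ∀ z, HasGradientAt F (F' z) z) (hP : IsMetricProjection S P)
    (hFP : ∀ z, F z - Fs ≤ ⟪F' z, z - P z⟫_ℝ) {p lam c A δ : ℝ} (hlam : 0 ≤ lam)
    (hc : c = lam * (α - 1 - p) / 2) (hc0 : 0 ≤ c) (hα : lam + 1 + p / 2 ≤ α) (hA : 0 ≤ A)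
    (hδ : 0 < δ)
    (hrem : ∀ t, T ≤ t → (2 + p - lam) * (t ^ 2 * (F (x t) - Fs))
      + p * c * ‖x t - P (x t)‖ ^ 2 ≤ A * t ^ (δ - p)) :
    ∃ C, ∀ t, T ≤ t → avdEnergy F Fs c lam x v (P (x t)) t ≤ C * t ^ (δ - p) := by
  set E := fun t => avdEnergy F Fs c lam x v (P (x t)) t
  set C := T ^ p * |E T| / T ^ δ + A / δ with hC
  have hCT : T ^ p * E T ≤ C * T ^ δ := by
    have hTδ : 0 < T ^ δ := by positivity
    have habs : T ^ p * E T ≤ T ^ p * |E T| := by gcongr; exact le_abs_self _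
    rw [hC, add_mul, div_mul_cancel₀ _ hTδ.ne']
    exact habs.trans (le_add_of_nonneg_right (by positivity))
  have hCA : A ≤ C * δ := by
    rw [hC, add_mul, div_mul_cancel₀ _ hδ.ne']
    exact le_add_of_nonneg_left (by positivity)
  have hB' : ∀ t, T ≤ t → t ^ (p - 1) * ((2 + p - lam) * (t ^ 2 * (F (x t) - Fs))
      + p * c * ‖x t - P (x t)‖ ^ 2) ≤ C * (δ * t ^ (δ - 1)) := fun t ht => by
    have ht0 : 0 < t := hT.trans_le ht
    calc _ ≤ t ^ (p - 1) * (A * t ^ (δ - p)) := by gcongr; exact hrem t ht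
      _ = A * t ^ (δ - 1) := by
          rw [mul_left_comm, ← Real.rpow_add ht0, add_comm, sub_add_sub_cancel]
      _ ≤ C * δ * t ^ (δ - 1) := by gcongr
      _ = C * (δ * t ^ (δ - 1)) := mul_assoc _ _ _
  refine ⟨C, fun t ht => ?_⟩
  have ht0 : 0 < t := hT.trans_le ht
  have hbound : t ^ p * E t ≤ C * t ^ δ := hsol.rpow_mul_avdEnergy_le hT hgrad hP hFP hlam hc hc0 hα
    (fun s hs => (Real.hasDerivAt_rpow_const (Or.inl (hT.trans_le hs).ne')).const_mul C)
    hCT hB' ht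
  rwa [Real.rpow_sub ht0, ← mul_div_assoc, le_div_iff₀' (by positivity)]

lemma exists_avdEnergy_le_mul_rpow (hsol : IsAVDSolution F' α T x v) (hT : 0 < T)
    (hgrad : ∀ z, HasGradientAt F (F' z) z) (hP : IsMetricProjection S P)
    (hFP : ∀ z, F z - Fs ≤ ⟪F' z, z - P z⟫_ℝ) {γ K : ℝ} (hγ : 2 < γ) (hK : 0 < K)
    (hα : 3 + 6 / (γ - 2) < α)
    (hgrowth : ∀ t, T ≤ t → K * ‖x t - P (x t)‖ ^ γ ≤ F (x t) - Fs) :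
    ∃ c lam C : ℝ, 0 ≤ c ∧ 0 ≤ lam ∧ ∀ t, T ≤ t →
      avdEnergy F Fs c lam x v (P (x t)) t ≤ C * t ^ (-(4 / (γ - 2))) := by
  set q : ℝ := 4 / (γ - 2) with hq
  have hq0 : 0 < q := div_pos four_pos (sub_pos.2 hγ)
  obtain ⟨δ, hδ, hαδ⟩ : ∃ δ : ℝ, 0 < δ ∧ 3 + 3 / 2 * q + 5 / 2 * δ ≤ α := by
    refine ⟨2 / 5 * (α - 3 - 3 / 2 * q), ?_, by linarith⟩
    have : 6 / (γ - 2) = 3 / 2 * q := by rw [hq]; ring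
    linarith
  set p : ℝ := q + δ with hp
  set lam : ℝ := 2 + p + δ with hlam
  set c : ℝ := lam * (α - 1 - p) / 2 with hc
  have hlam0 : 0 ≤ lam := by linarith
  have hc0 : 0 ≤ c := div_nonneg (mul_nonneg hlam0 (by linarith)) zero_le_two
  obtain ⟨A, hA, hyoung⟩ := exists_mul_sq_le_of_mul_rpow_le (A := p * c) (by positivity) hδ hK hγ
  have hpq : δ - p = -q := by rw [hp, sub_add_cancel_right]
  obtain ⟨C, hC⟩ := hsol.exists_avdEnergy_le_mul_rpow_sub (A := A) hT hgrad hP hFP hlam0 hc hc0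
    (by linarith) hA hδ fun t ht => by
      rw [hpq]
      linarith [hyoung t _ _ (hT.trans_le ht) (norm_nonneg _) (hgrowth t ht)]
  exact ⟨c, lam, C, hc0, hlam0, hpq ▸ hC⟩

/-- The exponent comes from `t² * t ^ (-(2 * γ) / (γ - 2)) = t ^ (-(4 / (γ - 2)))`. -/
lemma isBigO_sub_add_norm_velocity_sq (hsol : IsAVDSolution F' α T x v) (hT : 0 < T)
    (hgrad : ∀ z, HasGradientAt F (F' z) z) (hP : IsMetricProjection S P)
    (hFP : ∀ z, F z - Fs ≤ ⟪F' z, z - P z⟫_ℝ) {γ K : ℝ} (hγ : 2 < γ) (hK : 0 < K)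
    (hα : 3 + 6 / (γ - 2) < α)
    (hgrowth : ∀ t, T ≤ t → K * ‖x t - P (x t)‖ ^ γ ≤ F (x t) - Fs) :
    (fun t => F (x t) - Fs + ‖v t‖ ^ 2 / 2) =O[atTop]
      fun t : ℝ => t ^ (-(2 * γ) / (γ - 2)) := by
  obtain ⟨c, lam, C, hc, hlam, henergy⟩ :=
    hsol.exists_avdEnergy_le_mul_rpow hT hgrad hP hFP hγ hK hα hgrowth
  obtain ⟨A, -, hyoung⟩ := exists_mul_sq_le_of_mul_rpow_le (κ := 1 / 2) (sq_nonneg lam)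
    one_half_pos hK hγ
  refine IsBigO.of_bound (2 * (C + A)) ?_
  filter_upwards [eventually_ge_atTop T] with t ht
  have ht0 : 0 < t := hT.trans_le ht
  have hFx : 0 ≤ F (x t) - Fs :=
    (mul_nonneg hK.le (Real.rpow_nonneg (norm_nonneg _) γ)).trans (hgrowth t ht)
  have hpow : t ^ (-(4 / (γ - 2))) = t ^ 2 * t ^ (-(2 * γ) / (γ - 2)) := by
    have hγ' : γ - 2 ≠ 0 := (sub_pos.2 hγ).ne'
    rw [← Real.rpow_two, ← Real.rpow_add ht0]
    congr 1
    field_simp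
    ring
  have hlower := sub_mul_norm_mul_norm_le_avdEnergy (F := F) (Fs := Fs) (c := c) (x := x)
    (v := v) hlam ht0.le (P (x t))
  have habsorb := hyoung t _ _ ht0 (norm_nonneg _) (hgrowth t ht)
  have hupper := henergy t ht
  have hdist : 0 ≤ c * ‖x t - P (x t)‖ ^ 2 := by positivity
  rw [hpow] at habsorb hupper
  rw [Real.norm_of_nonneg (by positivity), Real.norm_of_nonneg (by positivity)]
  refine le_of_mul_le_mul_left ?_ (pow_pos ht0 2)
  linarith [sq_nonneg (lam * ‖x t - P (x t)‖ - t * ‖v t‖ / 2)]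

lemma eventually_infDist_lt (hsol : IsAVDSolution F' α T x v) (hT : 0 < T)
    (hgrad : ∀ z, HasGradientAt F (F' z) z) (hP : IsMetricProjection S P)
    (hFP : ∀ z, F z - Fs ≤ ⟪F' z, z - P z⟫_ℝ) (hconv : ConvexOn ℝ univ F)
    (hFS : ∀ z ∈ S, F z ≤ Fs) (hα : 3 ≤ α) {ε m : ℝ} (hε : 0 ≤ ε) (hm : 0 < m)
    (hsphere : ∀ z, infDist z S = ε → m ≤ F z - Fs) :
    ∀ᶠ t in atTop, infDist (x t) S < ε := by
  obtain ⟨C, hC⟩ := hsol.exists_sub_le_div_sq hT hgrad hP hFP hα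
  have hlim : Tendsto (fun t : ℝ => C / t ^ 2) atTop (𝓝 0) :=
    (tendsto_pow_atTop two_ne_zero).const_div_atTop C
  have hconn : IsPreconnected {z ∈ univ | F z < Fs + m} := (hconv.convex_lt _).isPreconnected
  filter_upwards [eventually_ge_atTop T, hlim.eventually_lt_const hm] with t ht htm
  refine infDist_lt_of_isPreconnected hconn ⟨P (x t), hP.mem _, mem_univ _, ?_⟩ hε
    (fun u hu huε => ?_) ⟨mem_univ _, ?_⟩
  · exact (hFS _ (hP.mem _)).trans_lt (lt_add_of_pos_right _ hm)
  · linarith [hu.2, hsphere u huε]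
  · linarith [hC t ht]

lemma isBigO_sub_add_norm_velocity_sq_of_local_growth (hsol : IsAVDSolution F' α T x v)
    (hconv : ConvexOn ℝ univ F) (hgrad : ∀ z, HasGradientAt F (F' z) z)
    (hP : IsMetricProjection S P) (hFS : ∀ z ∈ S, F z = Fs) {γ K ε : ℝ} (hγ : 2 < γ)
    (hK : 0 < K) (hε : 0 < ε) (hα : 3 + 6 / (γ - 2) < α)
    (hgrowth : ∀ z, infDist z S ≤ ε → K * infDist z S ^ γ ≤ F z - Fs) :
    (fun t => F (x t) - Fs + ‖v t‖ ^ 2 / 2) =O[atTop]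
      fun t : ℝ => t ^ (-(2 * γ) / (γ - 2)) := by
  have hα3 : 3 ≤ α := by
    have : 0 < 6 / (γ - 2) := div_pos (by norm_num) (sub_pos.2 hγ)
    linarith
  have hFP : ∀ z, F z - Fs ≤ ⟪F' z, z - P z⟫_ℝ := fun z => by
    rw [← hFS _ (hP.mem z)]
    exact sub_le_inner_gradient_of_convexOn hconv (hgrad z) _
  have hnear : ∀ᶠ t in atTop, infDist (x t) S < ε :=
    (hsol.mono (le_max_left T 1)).eventually_infDist_lt (lt_max_of_lt_right one_pos) hgrad hP hFP
      hconv (fun z hz => (hFS z hz).le) hα3 hε.le (by positivity : 0 < K * ε ^ γ)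
      fun z hz => by simpa [hz] using hgrowth z hz.le
  obtain ⟨T', hT'⟩ := eventually_atTop.1 (hnear.and (eventually_ge_atTop (max T 1)))
  obtain ⟨-, hTT'⟩ := hT' T' le_rfl
  refine (hsol.mono ((le_max_left _ _).trans hTT')).isBigO_sub_add_norm_velocity_sq
    (one_pos.trans_le ((le_max_right _ _).trans hTT')) hgrad hP hFP hγ hK hα fun t ht => ?_
  rw [hP.norm_sub_eq_infDist]
  exact hgrowth _ (hT' t ht).1.le

end IsAVDSolution

end HilbertSpace

theorem avd_holder_convergence_general
    {H : Type*} [NormedAddCommGroup H] [InnerProductSpace ℝ H] [CompleteSpace H]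
    (F : H → ℝ) (F' : H → H)
    (hconv : ConvexOn ℝ Set.univ F)
    (hgrad : ∀ z : H, HasGradientAt F (F' z) z)
    (Xstar : Set H) (hXstar : Xstar = {z : H | ∀ w : H, F z ≤ F w})
    (hXne : Xstar.Nonempty)
    (Fstar : ℝ) (hFstar : ∀ z ∈ Xstar, F z = Fstar)
    (γ K ε : ℝ) (hγ : 2 < γ) (hK : 0 < K) (hε : 0 < ε)
    (hgrowth : ∀ z : H, infDist z Xstar ≤ ε → K * infDist z Xstar ^ γ ≤ F z - Fstar)
    (α t₀ : ℝ) (hα : 3 + 6 / (γ - 2) < α)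
    (x v a : ℝ → H)
    (hx : ∀ t : ℝ, t₀ ≤ t → HasDerivAt x (v t) t)
    (hv : ∀ t : ℝ, t₀ ≤ t → HasDerivAt v (a t) t)
    (hode : ∀ t : ℝ, t₀ ≤ t → a t + (α / t) • v t + F' (x t) = 0) :
    ((fun t : ℝ => F (x t) - Fstar) =O[atTop] fun t : ℝ => t ^ (-(2 * γ) / (γ - 2))) ∧
    ((fun t : ℝ => ‖v t‖) =O[atTop] fun t : ℝ => t ^ (-γ / (γ - 2))) ∧
    ∃ xlim ∈ Xstar, Tendsto x atTop (𝓝 xlim) := by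
  have hF : Continuous F := continuous_iff_continuousAt.2 fun z => (hgrad z).continuousAt
  obtain ⟨y, hy⟩ := hXne
  obtain rfl : F y = Fstar := hFstar y hy
  have hmin : ∀ z, F y ≤ F z := by simpa [hXstar] using hy
  obtain rfl : Xstar = {z | F z ≤ F y} := hXstar.trans (setOf_forall_le_eq_setOf_le hmin)
  obtain ⟨P, hP⟩ := IsMetricProjection.exists_of_convex ⟨y, hy⟩
    (isClosed_le hF continuous_const).isComplete (by simpa using hconv.convex_le (F y))
  have hsol : IsAVDSolution F' α t₀ x v := ⟨hx, fun t ht => (hv t ht).congr_deriv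
    (by linear_combination (norm := module) hode t ht)⟩
  have hrate := hsol.isBigO_sub_add_norm_velocity_sq_of_local_growth hconv hgrad hP hFstar hγ hK hε
    hα hgrowth
  have hgap : ∀ t, 0 ≤ F (x t) - F y := fun t => sub_nonneg.2 (hmin (x t))
  have hFrate : (fun t => F (x t) - F y) =O[atTop] fun t : ℝ => t ^ (-(2 * γ) / (γ - 2)) :=
     (IsBigO.of_norm_le fun t => by
    rw [Real.norm_of_nonneg (hgap t)]
    exact le_add_of_nonneg_right (by positivity)).trans hrate
  have hvrate : v =O[atTop] fun t : ℝ => t ^ (-γ / (γ - 2)) :=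
    isBigO_rpow_of_isBigO_add_norm_sq_div_two hgap (by convert hrate using 3; ring)
  obtain ⟨l, hl⟩ := exists_tendsto_of_hasDerivAt_of_isBigO_rpow hx hsol.continuousOn_velocity
    (by rw [div_lt_iff₀ (sub_pos.2 hγ)]; linarith) hvrate
  have hFl : F l = F y := eq_of_tendsto_of_isBigO_rpow hF.continuousAt hl
    (div_neg_of_neg_of_pos (by linarith) (sub_pos.2 hγ)) hFrate
  exact ⟨hFrate, hvrate.norm_left, l, hFl.le, hl⟩

/-- Trajectories of the AVD system `ẍ + (α/t) ẋ + ∇F(x) = 0` for a convex, coercive,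
differentiable `F` with a second order regular set of minimizers, under a local Hölderian
growth condition `G^γ_loc` (γ > 2) and `α > 9/2 + 6/(γ-2)`:
`F(x(t)) - F* = O(t^{-2γ/(γ-2)})`, `‖ẋ(t)‖ = O(t^{-γ/(γ-2)})`, and the trajectory
converges strongly to a minimizer. -/
theorem avd_holder_convergence
    {H : Type*} [NormedAddCommGroup H] [InnerProductSpace ℝ H] [CompleteSpace H]
    (F : H → ℝ) (F' : H → H)
    (hconv : ConvexOn ℝ Set.univ F)
    (hgrad : ∀ z : H, HasGradientAt F (F' z) z)
    (hcoercive : Tendsto F (Bornology.cobounded H) atTop)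
    (Xstar : Set H) (hXstar : Xstar = {z : H | ∀ w : H, F z ≤ F w})
    (hXne : Xstar.Nonempty)
    (hreg : SecondOrderRegular Xstar)
    (Fstar : ℝ) (hFstar : ∀ z ∈ Xstar, F z = Fstar)
    -- local Hölderian growth condition `G^γ_loc`
    (γ K ε : ℝ) (hγ : 2 < γ) (hK : 0 < K) (hε : 0 < ε)
    (hgrowth : ∀ z : H, infDist z Xstar ≤ ε → K * infDist z Xstar ^ γ ≤ F z - Fstar)
    -- a twice differentiable solution of (AVD) on `[t₀, ∞)`
    (α t₀ : ℝ) (hα : 9 / 2 + 6 / (γ - 2) < α)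
    (x v a : ℝ → H)
    (hx : ∀ t : ℝ, t₀ ≤ t → HasDerivAt x (v t) t)
    (hv : ∀ t : ℝ, t₀ ≤ t → HasDerivAt v (a t) t)
    (hode : ∀ t : ℝ, t₀ ≤ t → a t + (α / t) • v t + F' (x t) = 0) :
    ((fun t : ℝ => F (x t) - Fstar) =O[atTop] fun t : ℝ => t ^ (-(2 * γ) / (γ - 2))) ∧
    ((fun t : ℝ => ‖v t‖) =O[atTop] fun t : ℝ => t ^ (-γ / (γ - 2))) ∧
    ∃ xlim ∈ Xstar, Tendsto x atTop (𝓝 xlim) := by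
  exact avd_holder_convergence_general F F' hconv hgrad Xstar hXstar hXne Fstar hFstar γ K ε
    hγ hK hε hgrowth α t₀ (by linarith) x v a hx hv hode
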